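/- For every natural number m with m ≥ 2 and every real number d, the sum over j from 1 to m−1 of (d − 4 + 4cos(2πj/m)) / (16 sin⁴(πj/m)) equals (4(m⁴ − 20m² + 19) + (d−4)(m⁴ + 10m² − 11))/720. -/

import Mathlib

open Real Finset

/-!
For an `m`-th root of unity `x ≠ 1`, the discrete Fourier transform of `r ↦ r (m - r)` at `x` is
`2 m x / (x - 1) ^ 2`, and at `x = exp (2 i θ)` this equals `-m / (2 sin² θ)`. Fourier inversion at
`0` therefore evaluates `∑ 1 / sin²` in terms of `∑ r (m - r)`, and Parseval's identity evaluates
`∑ 1 / sin⁴` in terms of `∑ r² (m - r)²`. Since `cos 2θ = 1 - 2 sin² θ`, the theorem is a linear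
combination of these two evaluations.
-/

-- Summation by parts for `P r = r (c - r)`: the coefficients of `(x - 1) ^ 2`, `-x (x - 1)` and
-- `x ^ 2` are `P`, `Δ P` and `Δ² P = -2`, evaluated at `n` and at `0`.
lemma sub_one_pow_three_mul_sum_mul_sub_mul_pow {R : Type*} [CommRing R] (c x : R) (n : ℕ) :
    (x - 1) ^ 3 * ∑ r ∈ range n, (r * (c - r)) * x ^ r
      = x ^ n * (n * (c - n) * (x - 1) ^ 2 - (c - 2 * n - 1) * (x * (x - 1)) - 2 * x ^ 2)
        + (c - 1) * (x * (x - 1)) + 2 * x ^ 2 := by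
  induction n with
  | zero =>
    rw [sum_range_zero]
    push_cast
    ring
  | succ n ih =>
    rw [sum_range_succ, mul_add, ih]
    push_cast
    ring

section RootsOfUnity

variable {K : Type*} [Field K] {m : ℕ} {ζ : K}

lemma sum_pow_mul_inv_pow_of_isPrimitiveRoot (hζ : IsPrimitiveRoot ζ m) {r s : ℕ}
    (hr : r < m) (hs : s < m) :
    ∑ j ∈ range m, (ζ ^ j) ^ r * (ζ ^ j)⁻¹ ^ s = if r = s then (m : K) else 0 := by
  have hζ₀ : ζ ≠ 0 := hζ.ne_zero (by lia)
  have geometric (j : ℕ) : (ζ ^ j) ^ r * (ζ ^ j)⁻¹ ^ s = (ζ ^ r / ζ ^ s) ^ j := by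
    rw [inv_pow, ← div_eq_mul_inv, div_pow, pow_right_comm, pow_right_comm ζ j s]
  simp only [geometric]
  split_ifs with h
  · simp [h, hζ₀]
  · have ratio_ne_one : ζ ^ r / ζ ^ s ≠ 1 := fun h₁ ↦
      h (hζ.pow_inj hr hs ((div_eq_one_iff_eq (pow_ne_zero s hζ₀)).mp h₁))
    have ratio_pow : (ζ ^ r / ζ ^ s) ^ m = 1 := by
      rw [div_pow, pow_right_comm, pow_right_comm ζ s, hζ.pow_eq_one, one_pow, one_pow, div_one]
    rw [geom_sum_eq ratio_ne_one, ratio_pow, sub_self, zero_div]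

lemma parseval_of_isPrimitiveRoot (hζ : IsPrimitiveRoot ζ m) (f g : ℕ → K) :
    ∑ j ∈ range m, (∑ r ∈ range m, f r * (ζ ^ j) ^ r) * ∑ s ∈ range m, g s * (ζ ^ j)⁻¹ ^ s
      = m * ∑ r ∈ range m, f r * g r := by
  calc
    _ = ∑ r ∈ range m, ∑ s ∈ range m,
          f r * g s * ∑ j ∈ range m, (ζ ^ j) ^ r * (ζ ^ j)⁻¹ ^ s := by
      simp_rw [sum_mul_sum, mul_mul_mul_comm, mul_sum]
      rw [sum_comm]
      exact sum_congr rfl fun r _ ↦ sum_comm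
    _ = ∑ r ∈ range m, ∑ s ∈ range m, f r * g s * if r = s then (m : K) else 0 :=
      sum_congr rfl fun r hr ↦ sum_congr rfl fun s hs ↦ by
        rw [sum_pow_mul_inv_pow_of_isPrimitiveRoot hζ (mem_range.mp hr) (mem_range.mp hs)]
    _ = m * ∑ r ∈ range m, f r * g r := by
      rw [mul_sum]
      refine sum_congr rfl fun r hr ↦ ?_
      simp only [mul_ite, mul_zero, sum_ite_eq, hr, if_true]
      exact mul_comm _ _

lemma fourier_inversion_zero_of_isPrimitiveRoot [NeZero m] (hζ : IsPrimitiveRoot ζ m)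
    (f : ℕ → K) :
    ∑ j ∈ range m, ∑ r ∈ range m, f r * (ζ ^ j) ^ r = m * f 0 := by
  simpa [Pi.single_apply, NeZero.pos m] using parseval_of_isPrimitiveRoot hζ f (Pi.single 0 1)

lemma sum_mul_sub_mul_pow_of_pow_eq_one {x : K} {n : ℕ} (hx : x ^ n = 1) (hx₁ : x ≠ 1) :
    ∑ r ∈ range n, ((r : K) * (n - r)) * x ^ r = 2 * n * (x / (x - 1) ^ 2) := by
  have hx₀ : x - 1 ≠ 0 := sub_ne_zero.mpr hx₁
  apply mul_left_cancel₀ (pow_ne_zero 3 hx₀)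
  rw [sub_one_pow_three_mul_sum_mul_sub_mul_pow, hx]
  field_simp
  ring

lemma sum_mul_sub_mul_pow_of_isPrimitiveRoot (hζ : IsPrimitiveRoot ζ m) {j : ℕ}
    (hj : 1 ≤ j) (hjm : j < m) :
    ∑ r ∈ range m, ((r : K) * (m - r)) * (ζ ^ j) ^ r = 2 * m * (ζ ^ j / (ζ ^ j - 1) ^ 2) :=
  sum_mul_sub_mul_pow_of_pow_eq_one (by rw [pow_right_comm, hζ.pow_eq_one, one_pow])
    (hζ.pow_ne_one_of_pos_of_lt (by lia) hjm)

lemma inv_div_inv_sub_one_sq (x : K) : x⁻¹ / (x⁻¹ - 1) ^ 2 = x / (x - 1) ^ 2 := by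
  rcases eq_or_ne x 0 with rfl | hx
  · simp
  · rw [show x⁻¹ - 1 = -(x - 1) / x by field_simp; ring, div_pow, neg_sq]
    field_simp

end RootsOfUnity

section CharZero

variable {K : Type*} [Field K] [CharZero K]

lemma sum_range_mul_sub (c : K) (n : ℕ) :
    ∑ r ∈ range n, (r : K) * (c - r) = n * (n - 1) * (3 * c - 2 * n + 1) / 6 := by
  induction n with
  | zero => simp
  | succ n ih =>
    rw [sum_range_succ, ih]
    push_cast
    field

lemma sum_range_mul_sub_sq (c : K) (n : ℕ) :
    ∑ r ∈ range n, ((r : K) * (c - r)) ^ 2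
      = n * (n - 1) * (5 * c ^ 2 * (2 * n - 1) - 15 * c * n * (n - 1)
          + (2 * n - 1) * (3 * n ^ 2 - 3 * n - 1)) / 30 := by
  induction n with
  | zero => simp
  | succ n ih =>
    rw [sum_range_succ, ih]
    push_cast
    field

variable {m : ℕ} [NeZero m] {ζ : K}

lemma sum_div_sub_one_sq_of_isPrimitiveRoot (hζ : IsPrimitiveRoot ζ m) :
    ∑ j ∈ Ico 1 m, ζ ^ j / (ζ ^ j - 1) ^ 2 = -((m : K) ^ 2 - 1) / 12 := by
  have hm : (m : K) ≠ 0 := NeZero.ne _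
  have inversion := fourier_inversion_zero_of_isPrimitiveRoot hζ fun r ↦ (r : K) * (m - r)
  have transform : ∀ j ∈ Ico 1 m,
      ∑ r ∈ range m, (r : K) * (m - r) * (ζ ^ j) ^ r = 2 * m * (ζ ^ j / (ζ ^ j - 1) ^ 2) :=
    fun j hj ↦ sum_mul_sub_mul_pow_of_isPrimitiveRoot hζ (mem_Ico.mp hj).1 (mem_Ico.mp hj).2
  rw [sum_range_eq_add_Ico _ (NeZero.pos m), sum_congr rfl transform, ← mul_sum] at inversion
  simp only [pow_zero, one_pow, mul_one, sum_range_mul_sub, Nat.cast_zero, zero_mul, mul_zero]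
    at inversion
  apply mul_left_cancel₀ (mul_ne_zero two_ne_zero hm)
  linear_combination inversion

lemma sum_sq_div_sub_one_sq_of_isPrimitiveRoot (hζ : IsPrimitiveRoot ζ m) :
    ∑ j ∈ Ico 1 m, (ζ ^ j / (ζ ^ j - 1) ^ 2) ^ 2
      = ((m : K) ^ 4 + 10 * m ^ 2 - 11) / 720 := by
  have hm : (m : K) ≠ 0 := NeZero.ne _
  have parseval :=
    parseval_of_isPrimitiveRoot hζ (fun r ↦ (r : K) * (m - r)) fun r ↦ (r : K) * (m - r)
  have transform_mul : ∀ j ∈ Ico 1 m,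
      (∑ r ∈ range m, (r : K) * (m - r) * (ζ ^ j) ^ r)
          * ∑ r ∈ range m, (r : K) * (m - r) * (ζ ^ j)⁻¹ ^ r
        = (2 * m) ^ 2 * (ζ ^ j / (ζ ^ j - 1) ^ 2) ^ 2 := by
    intro j hj
    obtain ⟨hj₁, hjm⟩ := mem_Ico.mp hj
    rw [← inv_pow, sum_mul_sub_mul_pow_of_isPrimitiveRoot hζ hj₁ hjm,
      sum_mul_sub_mul_pow_of_isPrimitiveRoot hζ.inv hj₁ hjm, inv_pow, inv_div_inv_sub_one_sq,
      ← sq, mul_pow]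
  rw [sum_range_eq_add_Ico _ (NeZero.pos m), sum_congr rfl transform_mul, ← mul_sum] at parseval
  simp only [pow_zero, inv_one, one_pow, mul_one, ← sq, sum_range_mul_sub, sum_range_mul_sub_sq]
    at parseval
  apply mul_left_cancel₀ (pow_ne_zero 2 (mul_ne_zero two_ne_zero hm))
  linear_combination parseval

end CharZero

lemma exp_two_mul_mul_I_sub_one (θ : ℂ) :
    Complex.exp (2 * θ * Complex.I) - 1
      = 2 * Complex.I * Complex.sin θ * Complex.exp (θ * Complex.I) := by
  rw [mul_assoc, two_mul, Complex.exp_add, Complex.exp_mul_I]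
  linear_combination Complex.sin_sq_add_cos_sq θ - Complex.sin θ ^ 2 * Complex.I_sq

lemma one_div_sin_sq_eq_exp (θ : ℂ) :
    1 / Complex.sin θ ^ 2
      = -4 * (Complex.exp (2 * θ * Complex.I) / (Complex.exp (2 * θ * Complex.I) - 1) ^ 2) := by
  have exp_sq : Complex.exp (2 * θ * Complex.I) = Complex.exp (θ * Complex.I) ^ 2 := by
    rw [mul_assoc, two_mul, Complex.exp_add, sq]
  rw [exp_two_mul_mul_I_sub_one, exp_sq, mul_pow,
    div_mul_cancel_right₀ (pow_ne_zero 2 (Complex.exp_ne_zero _)), mul_pow, mul_pow, Complex.I_sq]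
  ring

lemma ofReal_one_div_sin_sq (m j : ℕ) :
    ((1 / sin (π * j / m) ^ 2 : ℝ) : ℂ)
      = -4 * (Complex.exp (2 * π * Complex.I / m) ^ j
          / (Complex.exp (2 * π * Complex.I / m) ^ j - 1) ^ 2) := by
  have exp_pow : Complex.exp (2 * π * Complex.I / m) ^ j
      = Complex.exp (2 * (π * j / m) * Complex.I) := by
    rw [← Complex.exp_nat_mul]
    ring_nf
  rw [exp_pow, ← one_div_sin_sq_eq_exp]
  push_cast
  rfl

lemma sum_one_div_sin_sq (m : ℕ) [NeZero m] :
    ∑ j ∈ Ico 1 m, 1 / sin (π * j / m) ^ 2 = ((m : ℝ) ^ 2 - 1) / 3 := by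
  apply Complex.ofReal_injective
  simp only [Complex.ofReal_sum, ofReal_one_div_sin_sq]
  rw [← mul_sum,
    sum_div_sub_one_sq_of_isPrimitiveRoot (Complex.isPrimitiveRoot_exp m (NeZero.ne m))]
  push_cast
  ring

lemma sum_one_div_sin_pow_four (m : ℕ) [NeZero m] :
    ∑ j ∈ Ico 1 m, 1 / sin (π * j / m) ^ 4 = ((m : ℝ) ^ 4 + 10 * m ^ 2 - 11) / 45 := by
  have pow_four (x : ℝ) : 1 / x ^ 4 = (1 / x ^ 2) ^ 2 := by
    rw [one_div_pow, ← pow_mul]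
  apply Complex.ofReal_injective
  simp only [pow_four, Complex.ofReal_sum, Complex.ofReal_pow, ofReal_one_div_sin_sq,
    mul_pow (-4 : ℂ)]
  rw [← mul_sum,
    sum_sq_div_sub_one_sq_of_isPrimitiveRoot (Complex.isPrimitiveRoot_exp m (NeZero.ne m))]
  push_cast
  ring

lemma sin_pi_mul_div_pos {m j : ℕ} (hj : 0 < j) (hjm : j < m) : 0 < sin (π * j / m) := by
  have hm : (0 : ℝ) < m := by exact_mod_cast hj.trans hjm
  have lt_pi : π * j / m < π := by
    rw [div_lt_iff₀ hm]
    gcongr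
  exact sin_pos_of_pos_of_lt_pi (by positivity) lt_pi

/-- Example 3.5 (analytic content): for every integer `m ≥ 2` and every real `d`,
`∑_{j=1}^{m-1} (d − 4 + 4cos(2πj/m)) / (16 sin⁴(πj/m))
  = (4(m⁴ − 20m² + 19) + (d−4)(m⁴ + 10m² − 11))/720`. -/
theorem b01_codim_four_sum (m : ℕ) (hm : 2 ≤ m) (d : ℝ) :
    ∑ j ∈ Finset.Icc 1 (m - 1),
        (d - 4 + 4 * Real.cos (2 * π * j / m)) / (16 * (Real.sin (π * j / m)) ^ 4)
      = (4 * ((m : ℝ) ^ 4 - 20 * m ^ 2 + 19) + (d - 4) * ((m : ℝ) ^ 4 + 10 * m ^ 2 - 11)) / 720 := by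
  have hm₀ : NeZero m := ⟨by lia⟩
  have summand (j : ℕ) (hj : j ∈ Ico 1 m) :
      (d - 4 + 4 * cos (2 * π * j / m)) / (16 * sin (π * j / m) ^ 4)
        = d / 16 * (1 / sin (π * j / m) ^ 4) - 1 / 2 * (1 / sin (π * j / m) ^ 2) := by
    have sin_ne : sin (π * j / m) ≠ 0 :=
      (sin_pi_mul_div_pos (mem_Ico.mp hj).1 (mem_Ico.mp hj).2).ne'
    rw [show 2 * π * j / m = 2 * (π * j / m) by ring, cos_two_mul_eq_one_sub]
    field
  rw [Icc_sub_one_right_eq_Ico_of_not_isMin (by simpa using hm₀.out), sum_congr rfl summand,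
    sum_sub_distrib, ← mul_sum, ← mul_sum, sum_one_div_sin_pow_four, sum_one_div_sin_sq]
  ring
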